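/- Let α ∈ [1,∞), z ∈ ℂ∖ℝ, σ = ((1+α)²+4z)^{1/2} (principal square root), a_± = (1+α±σ)/2, and c ∈ ℂ. Let y₁(x) = ₂F₁(a₊,a₋;1;(1+x)/2) and let y₂(x) = ₂F₁(a₊,a₋;1;(1+x)/2) · ln((1+x)/2) + Σ_{n=1}^∞ ((a₊)_n (a₋)_n/(2^n (n!)²)) (1+x)^n [ψ(a₊+n)-ψ(a₊)+ψ(a₋+n)-ψ(a₋)-2ψ(n+1)-2γ_E] for x ∈ (-1,1). Then the function x ↦ -2^{-α-1} y₂(x) + c · y₁(x) belongs to L²((0,1); (1-x)^α dx) if and only if c = -2^{-α-1} [ 2γ_E + ψ((1+α+σ)/2) + ψ((1+α-σ)/2) ]. -/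

import Mathlib

/-!
Put `ξ = (1 + x) / 2`, `a, b = a_±` and `tₙ = (a)ₙ (b)ₙ / (n!)²`, so that `a + b = 1 + α`,
`a b = -z` and `y₁ = P(ξ) = ∑ tₙ ξⁿ`. With `dₙ = ψ(a+n) + ψ(b+n) - 2ψ(1+n)` and
`G(ξ) = ∑ dₙ tₙ ξⁿ` one has `y₂ = P log ξ + G - κ P`, where `κ = 2γ_E + ψ(a) + ψ(b)`
(`logSol_eq`). The function in question is therefore `-k (P log ξ + G) + (c + k κ) P` with
`k = 2^(-α-1)`, and the claim is that it is square integrable exactly when `c + k κ = 0`. This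
follows from `recessive`: near `ξ = 1` the function `P` is of exact order `(1 - ξ)^(-α)`, which is
not square integrable for the weight `(1 - x)^α` since `α ≥ 1`, while `P log ξ + G` is bounded.

For the order of `P`, Euler's limit for `Γ` gives `tₙ ~ K (α)ₙ / n!` with `K ≠ 0`, and the abelian
theorem `tendsto_powerSum` compares `P` with the binomial series `∑ (α)ₙ / n! ξⁿ = (1 - ξ)^(-α)`.
Differentiating Euler's limit yields `ψ(s+n) - ψ(1+n) → 0`, hence `dₙ → 0` and, by the same abelian
theorem, `(1 - ξ)^α G → 0`. Consequently `q = log ξ + G / P → 0` at `ξ = 1`. Abel's identity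
(`wronskian_const`) says that `q'` is a constant over `ξ (1 - ξ)^(α+1) P²`, which is
`O((1 - ξ)^(α-1))`; integrating from `1` gives `q = O((1 - ξ)^α)`, so `P log ξ + G = q P` is
bounded.
-/

open Complex MeasureTheory

/-- The Pochhammer symbol `(u)_n = ∏_{j=0}^{n-1} (u+j)` for complex `u`. -/
noncomputable def cpoch (u : ℂ) (n : ℕ) : ℂ := ∏ j ∈ Finset.range n, (u + (j : ℂ))

/-- The Gauss hypergeometric series `₂F₁(a,b;c;ξ)`. -/
noncomputable def hyp2F1 (a b c ξ : ℂ) : ℂ :=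
  ∑' n : ℕ, cpoch a n * cpoch b n / (cpoch c n * (n.factorial : ℂ)) * ξ ^ n

/-- Principal branch of the square root `σ_{α,β}(z) = ((1+α+β)^2 + 4z)^{1/2}`. -/
noncomputable def sigmaAB (α β : ℝ) (z : ℂ) : ℂ :=
  (((1 + α + β : ℝ) : ℂ) ^ 2 + 4 * z) ^ ((1 : ℂ) / 2)

/-- The digamma function `ψ = Γ'/Γ`. -/
noncomputable def cdigamma (z : ℂ) : ℂ := deriv Complex.Gamma z / Complex.Gamma z

/-- The Euler–Mascheroni constant, `γ_E = -ψ(1)`. -/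
noncomputable def eulerGammaC : ℂ := -cdigamma 1

/-- The first Jacobi solution for `β = 0`:
`y₁(x) = ₂F₁(a₊,a₋;1;(1+x)/2)`. -/
noncomputable def y1Leg (α : ℝ) (z : ℂ) (x : ℝ) : ℂ :=
  hyp2F1 ((1 + (α : ℂ) + sigmaAB α 0 z) / 2) ((1 + (α : ℂ) - sigmaAB α 0 z) / 2) 1
    (((1 + x) / 2 : ℝ) : ℂ)

/-- The logarithmic (second) solution of the Jacobi equation with `β = 0` at `x = -1`. -/
noncomputable def logSol (α : ℝ) (z : ℂ) (x : ℝ) : ℂ :=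
  y1Leg α z x * ((Real.log ((1 + x) / 2) : ℝ) : ℂ) +
    ∑' n : ℕ,
      cpoch ((1 + (α : ℂ) + sigmaAB α 0 z) / 2) (n + 1) *
          cpoch ((1 + (α : ℂ) - sigmaAB α 0 z) / 2) (n + 1) /
          ((2 : ℂ) ^ (n + 1) * (((n + 1).factorial : ℂ)) ^ 2) *
          (((1 + x : ℝ) : ℂ)) ^ (n + 1) *
        (cdigamma ((1 + (α : ℂ) + sigmaAB α 0 z) / 2 + ((n : ℂ) + 1)) -
            cdigamma ((1 + (α : ℂ) + sigmaAB α 0 z) / 2) +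
            cdigamma ((1 + (α : ℂ) - sigmaAB α 0 z) / 2 + ((n : ℂ) + 1)) -
            cdigamma ((1 + (α : ℂ) - sigmaAB α 0 z) / 2) -
            2 * cdigamma ((n : ℂ) + 2) - 2 * eulerGammaC)

open Filter Topology

/-! ### Asymptotics of the digamma function -/

/-- Euler's finite Gamma products are bounded by `Γ` on the right half-plane, uniformly in `n`;
on the real axis this is log-convexity of `Γ`. -/
lemma norm_GammaSeq_le {w : ℂ} (hw : 0 < w.re) {n : ℕ} (hn : n ≠ 0) :
    ‖Complex.GammaSeq w n‖ ≤ Real.Gamma w.re := by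
  have hn0 : (0 : ℝ) < n := by exact_mod_cast Nat.pos_of_ne_zero hn
  have hpos : ∀ j : ℕ, 0 < w.re + j := fun j => by positivity
  have h1 : ‖Complex.GammaSeq w n‖ ≤ Real.GammaSeq w.re n := by
    rw [Complex.GammaSeq, Real.GammaSeq, norm_div, norm_mul, norm_prod, Complex.norm_natCast,
      Complex.norm_natCast_cpow_of_pos (Nat.pos_of_ne_zero hn)]
    refine div_le_div_of_nonneg_left (by positivity)
      (Finset.prod_pos fun j _ => hpos j) ?_
    refine Finset.prod_le_prod (fun j _ => (hpos j).le) fun j _ => ?_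
    calc w.re + j = (w + j).re := by simp
      _ ≤ _ := Complex.re_le_norm _
  refine h1.trans ?_
  have h2 := Real.BohrMollerup.ge_logGammaSeq (n := n) (x := w.re) Real.convexOn_log_Gamma
    (fun {y} hy => by
      simp only [Function.comp_apply]
      rw [Real.Gamma_add_one hy.ne', Real.log_mul hy.ne' (Real.Gamma_pos_of_pos hy).ne', add_comm])
    hw hn
  simp only [Function.comp_apply, Real.Gamma_one, Real.log_one, zero_add] at h2
  have h3 : Real.BohrMollerup.logGammaSeq w.re n = Real.log (Real.GammaSeq w.re n) := by
    rw [Real.BohrMollerup.logGammaSeq, Real.GammaSeq, Real.log_div, Real.log_mul, Real.log_rpow hn0,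
      Real.log_prod fun j _ => (hpos j).ne']
    · positivity
    · positivity
    · positivity
    · exact (Finset.prod_pos fun j _ => hpos j).ne'
  rw [h3] at h2
  refine (Real.log_le_log_iff ?_ (Real.Gamma_pos_of_pos hw)).1 h2
  exact div_pos (by positivity) (Finset.prod_pos fun j _ => hpos j)

lemma cpoch_ne_zero {s : ℂ} (hs : ∀ m : ℕ, s ≠ -m) (n : ℕ) : cpoch s n ≠ 0 :=
  Finset.prod_ne_zero_iff.2 fun j _ h => hs j (eq_neg_of_add_eq_zero_left h)

lemma ne_neg_nat_of_re_pos {s : ℂ} (hs : 0 < s.re) (m : ℕ) : s ≠ -m := by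
  rintro rfl
  simp at hs
  have : (0 : ℝ) ≤ m := by positivity
  linarith

lemma hasDerivAt_GammaSeq {s : ℂ} (hs : ∀ m : ℕ, s ≠ -m) {n : ℕ} (hn : n ≠ 0) :
    HasDerivAt (fun w => Complex.GammaSeq w n)
      (Complex.GammaSeq s n *
        (Complex.log n - ∑ j ∈ Finset.range (n + 1), (s + j)⁻¹)) s := by
  have hn0 : (n : ℂ) ≠ 0 := by exact_mod_cast hn
  have hp : HasDerivAt (fun w : ℂ => ∏ j ∈ Finset.range (n + 1), (w + (j : ℂ)))
      ((∏ j ∈ Finset.range (n + 1), (s + (j : ℂ))) *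
        ∑ j ∈ Finset.range (n + 1), (s + (j : ℂ))⁻¹) s := by
    have hne : ∀ j ∈ Finset.range (n + 1), s + (j : ℂ) ≠ 0 :=
      fun j _ h => hs j (eq_neg_of_add_eq_zero_left h)
    have hd : DifferentiableAt ℂ (fun w : ℂ => ∏ j ∈ Finset.range (n + 1), (w + (j : ℂ))) s := by
      fun_prop
    have h := logDeriv_prod (f := fun (j : ℕ) (w : ℂ) => w + (j : ℂ)) hne (fun j _ => by fun_prop)
    rw [logDeriv_apply, div_eq_iff (Finset.prod_ne_zero_iff.2 hne)] at h
    have h' := hd.hasDerivAt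
    rw [h] at h'
    refine h'.congr_deriv ?_
    rw [mul_comm]
    congr 1
    refine Finset.sum_congr rfl fun j _ => ?_
    simp [logDeriv_apply]
  have hne : (∏ j ∈ Finset.range (n + 1), (s + (j : ℂ))) ≠ 0 := cpoch_ne_zero hs _
  have hc : HasDerivAt (fun w : ℂ => (n : ℂ) ^ w) ((n : ℂ) ^ s * Complex.log n) s := by
    simpa using (hasDerivAt_id s).const_cpow (c := (n : ℂ)) (Or.inl hn0)
  have := (hc.mul_const (n.factorial : ℂ)).fun_div hp hne
  simp only [Complex.GammaSeq]
  refine this.congr_deriv ?_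
  field_simp

lemma cdigamma_eq : cdigamma = Complex.digamma := by
  ext s; rw [cdigamma, Complex.digamma_def, logDeriv_apply]

lemma cdigamma_add_one {s : ℂ} (hs : ∀ m : ℕ, s ≠ -m) :
    cdigamma (s + 1) = cdigamma s + s⁻¹ := by
  rw [cdigamma_eq, Complex.digamma_apply_add_one s hs]

lemma ne_neg_nat_add {s : ℂ} (hs : ∀ m : ℕ, s ≠ -m) (n m : ℕ) : s + n ≠ -m := fun h =>
  hs (m + n) (by push_cast; linear_combination h)

lemma cdigamma_add_nat {s : ℂ} (hs : ∀ m : ℕ, s ≠ -m) (n : ℕ) :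
    cdigamma (s + n) = cdigamma s + ∑ j ∈ Finset.range n, (s + j)⁻¹ := by
  induction n with
  | zero => simp
  | succ n ih =>
    rw [Finset.sum_range_succ, ← add_assoc, ← ih, ← cdigamma_add_one (ne_neg_nat_add hs n)]
    push_cast; ring_nf

/-- Differentiated Euler limit: by Cauchy's formula and dominated convergence the derivatives of
the Euler products converge to `Γ'`. -/
lemma tendsto_deriv_GammaSeq {s : ℂ} (hs : 0 < s.re) :
    Tendsto (fun n => deriv (fun w => Complex.GammaSeq w n) s) atTop (𝓝 (deriv Complex.Gamma s)) := by
  set R := s.re / 2 with hR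
  have hR0 : 0 < R := by positivity
  set U : Set ℂ := {w | 0 < w.re}
  have hU : IsOpen U := isOpen_lt continuous_const Complex.continuous_re
  have hsub : Metric.closedBall s R ⊆ U := by
    intro w hw
    have h1 : |(w - s).re| ≤ R := (Complex.abs_re_le_norm _).trans (by simpa [dist_eq_norm] using hw)
    have := (abs_le.1 h1).1
    simp only [Complex.sub_re] at this
    change 0 < w.re
    linarith
  have hcirc : ∀ θ, circleMap s R θ ∈ U := fun θ =>
    hsub (circleMap_mem_closedBall s hR0.le θ)
  have hmem : s ∈ Metric.ball s R := Metric.mem_ball_self hR0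
  have hΓ : DifferentiableOn ℂ Complex.Gamma U := fun w hw =>
    (Complex.differentiableAt_Gamma w (ne_neg_nat_of_re_pos hw)).differentiableWithinAt
  have hseq : ∀ n : ℕ, n ≠ 0 → DifferentiableOn ℂ (fun w => Complex.GammaSeq w n) U :=
    fun n hn w hw =>
      (hasDerivAt_GammaSeq (ne_neg_nat_of_re_pos hw) hn).differentiableAt.differentiableWithinAt
  rw [← Complex.two_pi_I_inv_smul_circleIntegral_sub_sq_inv_smul_of_differentiable hU hsub hΓ hmem]
  have hev : ∀ᶠ n : ℕ in atTop, (2 * (Real.pi : ℂ) * Complex.I)⁻¹ •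
      (∮ (w : ℂ) in C(s, R), ((w - s) ^ 2)⁻¹ • Complex.GammaSeq w n)
        = deriv (fun w => Complex.GammaSeq w n) s := by
    filter_upwards [eventually_ne_atTop 0] with n hn
    exact Complex.two_pi_I_inv_smul_circleIntegral_sub_sq_inv_smul_of_differentiable hU hsub
      (hseq n hn) hmem
  refine Tendsto.congr' hev (Tendsto.const_smul ?_ _)
  have hcont : ∀ f : ℂ → ℂ, DifferentiableOn ℂ f U →
      Continuous fun θ => deriv (circleMap s R) θ •
        ((circleMap s R θ - s) ^ 2)⁻¹ • f (circleMap s R θ) := by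
    intro f hf
    have h1 : Continuous fun θ => f (circleMap s R θ) :=
      hf.continuousOn.comp_continuous (continuous_circleMap s R) hcirc
    have h2 : Continuous fun θ => ((circleMap s R θ - s) ^ 2)⁻¹ := by
      refine Continuous.inv₀ (((continuous_circleMap s R).sub continuous_const).pow 2) fun θ => ?_
      refine pow_ne_zero _ (sub_ne_zero.2 (circleMap_ne_center hR0.ne'))
    have h3 : Continuous fun θ => deriv (circleMap s R) θ := by
      simp only [deriv_circleMap]
      exact (continuous_circleMap 0 R).mul continuous_const
    exact h3.smul (h2.smul h1)
  simp only [circleIntegral]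
  refine intervalIntegral.tendsto_integral_filter_of_dominated_convergence
    (fun θ => R * ((R ^ 2)⁻¹ * Real.Gamma (circleMap s R θ).re)) ?_ ?_ ?_ ?_
  · filter_upwards [eventually_ne_atTop 0] with n hn
    exact (hcont _ (hseq n hn)).aestronglyMeasurable
  · filter_upwards [eventually_ne_atTop 0] with n hn
    refine Eventually.of_forall fun θ _ => ?_
    have h1 : ‖deriv (circleMap s R) θ‖ = R := by simp [deriv_circleMap, abs_of_pos hR0]
    have h2 : ‖((circleMap s R θ - s) ^ 2)⁻¹‖ = (R ^ 2)⁻¹ := by simp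
    rw [norm_smul, norm_smul, h1, h2]
    gcongr
    exact norm_GammaSeq_le (hcirc θ) hn
  · refine Continuous.intervalIntegrable ?_ _ _
    refine continuous_const.mul (continuous_const.mul ?_)
    refine ContinuousOn.comp_continuous (s := Set.Ioi 0) (g := Real.Gamma) ?_
      (Complex.continuous_re.comp (continuous_circleMap s R)) hcirc
    exact Real.differentiableOn_Gamma_Ioi.continuousOn
  · refine Eventually.of_forall fun θ _ => ?_
    exact ((Complex.GammaSeq_tendsto_Gamma _).const_smul _).const_smul _

/-- `ψ(s + n + 1) - log n → 0`. -/
lemma tendsto_cdigamma_sub_log {s : ℂ} (hs : 0 < s.re) :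
    Tendsto (fun n : ℕ => cdigamma (s + (n + 1 : ℕ)) - Complex.log n) atTop (𝓝 0) := by
  have hs' := ne_neg_nat_of_re_pos hs
  have hΓ := Complex.Gamma_ne_zero hs'
  have h := (tendsto_deriv_GammaSeq hs).div (Complex.GammaSeq_tendsto_Gamma s) hΓ
  have h2 : Tendsto (fun n : ℕ => cdigamma s - (deriv (fun w => Complex.GammaSeq w n) s)
      / Complex.GammaSeq s n) atTop (𝓝 (cdigamma s - cdigamma s)) := h.const_sub _
  rw [sub_self] at h2
  refine h2.congr' ?_
  filter_upwards [eventually_ne_atTop 0] with n hn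
  have hn0 : (n : ℂ) ≠ 0 := by exact_mod_cast hn
  have hG : Complex.GammaSeq s n ≠ 0 :=
    div_ne_zero (mul_ne_zero (by simp [hn0]) (by exact_mod_cast n.factorial_ne_zero))
      (cpoch_ne_zero hs' _)
  rw [(hasDerivAt_GammaSeq hs' hn).deriv, mul_div_cancel_left₀ _ hG, cdigamma_add_nat hs']
  ring

lemma tendsto_cdigamma_sub {s : ℂ} :
    Tendsto (fun n : ℕ => cdigamma (s + n) - cdigamma (1 + n)) atTop (𝓝 0) := by
  obtain ⟨m, hm⟩ := exists_nat_gt (-s.re)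
  have h1 := tendsto_cdigamma_sub_log (s := s + m) (by simp; linarith)
  have h2 := tendsto_cdigamma_sub_log (s := 1 + m) (by simp; positivity)
  have h3 := h1.sub h2
  rw [sub_zero] at h3
  rw [← tendsto_add_atTop_iff_nat (m + 1)]
  refine h3.congr fun n => ?_
  push_cast
  ring_nf

/-! ### Power series on the unit interval -/

/-- The sum of the power series `∑ uₙ ξⁿ` at a real point. -/
noncomputable def powerSum (u : ℕ → ℂ) (ξ : ℝ) : ℂ := ∑' n : ℕ, u n * (ξ : ℂ) ^ n

/-- Absolute convergence of `∑ uₙ ξⁿ` for all `|ξ| < 1`. -/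
def UnitConv (u : ℕ → ℂ) : Prop := ∀ r : ℝ, 0 ≤ r → r < 1 → Summable fun n => ‖u n‖ * r ^ n

lemma UnitConv.summable {u : ℕ → ℂ} (hu : UnitConv u) {ξ : ℝ} (h0 : 0 ≤ ξ) (h1 : ξ < 1) :
    Summable fun n => u n * (ξ : ℂ) ^ n := by
  refine Summable.of_norm ((hu ξ h0 h1).congr fun n => ?_)
  simp [abs_of_nonneg h0]

lemma UnitConv.add {u v : ℕ → ℂ} (hu : UnitConv u) (hv : UnitConv v) :
    UnitConv fun n => u n + v n := fun r h0 h1 => by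
  refine Summable.of_nonneg_of_le (fun n => by positivity) (fun n => ?_)
    ((hu r h0 h1).add (hv r h0 h1))
  rw [← add_mul]
  gcongr
  exact norm_add_le _ _

lemma UnitConv.mul_bounded {u v : ℕ → ℂ} (hu : UnitConv u) {M : ℝ} (hv : ∀ n, ‖v n‖ ≤ M) :
    UnitConv fun n => v n * u n := fun r h0 h1 => by
  refine Summable.of_nonneg_of_le (fun n => by positivity) (fun n => ?_) ((hu r h0 h1).mul_left M)
  rw [norm_mul, mul_assoc]
  gcongr
  exact hv n

lemma UnitConv.const_mul {u : ℕ → ℂ} (hu : UnitConv u) (k : ℂ) : UnitConv fun n => k * u n :=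
  hu.mul_bounded (v := fun _ => k) fun _ => le_rfl

lemma UnitConv.nat_mul {u : ℕ → ℂ} (hu : UnitConv u) : UnitConv fun n => (n : ℂ) * u n := by
  intro r h0 h1
  obtain ⟨R, hrR, hR1⟩ := exists_between h1
  have hR0 : 0 < R := h0.trans_lt hrR
  have hb := (hu R hR0.le hR1).tendsto_atTop_zero.bddAbove_range
  obtain ⟨M, hM⟩ := hb
  have hq : ‖r / R‖ < 1 := by
    rw [Real.norm_of_nonneg (by positivity), div_lt_one hR0]; exact hrR
  have hs := (summable_pow_mul_geometric_of_norm_lt_one 1 hq).mul_left M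
  refine Summable.of_nonneg_of_le (fun n => by positivity) (fun n => ?_) hs
  have hMn : ‖u n‖ * R ^ n ≤ M := hM ⟨n, rfl⟩
  calc ‖(n : ℂ) * u n‖ * r ^ n = (‖u n‖ * R ^ n) * ((n : ℝ) ^ 1 * (r / R) ^ n) := by
        rw [norm_mul, Complex.norm_natCast, div_pow]; field_simp
    _ ≤ M * ((n : ℝ) ^ 1 * (r / R) ^ n) := by gcongr

lemma powerSum_add {u v : ℕ → ℂ} (hu : UnitConv u) (hv : UnitConv v) {ξ : ℝ} (h0 : 0 ≤ ξ)
    (h1 : ξ < 1) : powerSum (fun n => u n + v n) ξ = powerSum u ξ + powerSum v ξ := by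
  simp only [powerSum, add_mul]
  exact (hu.summable h0 h1).tsum_add (hv.summable h0 h1)

lemma powerSum_const_mul (k : ℂ) (u : ℕ → ℂ) (ξ : ℝ) :
    powerSum (fun n => k * u n) ξ = k * powerSum u ξ := by
  simp only [powerSum, mul_assoc, tsum_mul_left]

lemma powerSum_shift {u : ℕ → ℂ} (hu : UnitConv u) {ξ : ℝ} (h0 : 0 ≤ ξ) (h1 : ξ < 1) :
    powerSum u ξ = u 0 + ξ * powerSum (fun n => u (n + 1)) ξ := by
  simp only [powerSum]
  rw [(hu.summable h0 h1).tsum_eq_zero_add, ← tsum_mul_left]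
  simp only [pow_zero, mul_one]
  congr 1
  refine tsum_congr fun n => ?_
  ring

/-- Termwise differentiation, in the form `ξ u'(ξ) = ∑ n uₙ ξⁿ`. -/
lemma hasDerivAt_powerSum {u : ℕ → ℂ} (hu : UnitConv u) {ξ : ℝ} (h0 : 0 < ξ) (h1 : ξ < 1) :
    HasDerivAt (powerSum u) (powerSum (fun n => (n : ℂ) * u n) ξ / ξ) ξ := by
  obtain ⟨R, hξR, hR1⟩ := exists_between h1
  have hR0 : 0 < R := h0.trans hξR
  have hsum : Summable fun n : ℕ => ‖(n : ℂ) * u n‖ * R ^ n / R :=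
    (hu.nat_mul R hR0.le hR1).div_const R
  have hmem : ξ ∈ Set.Ioo (0 : ℝ) R := ⟨h0, hξR⟩
  have hξ : (ξ : ℂ) ≠ 0 := by exact_mod_cast h0.ne'
  have key := hasDerivAt_tsum_of_isPreconnected (𝕜 := ℝ) (F := ℂ)
    (g := fun n y => u n * (y : ℂ) ^ n) (g' := fun n y => u n * ((n : ℂ) * (y : ℂ) ^ (n - 1)))
    hsum isOpen_Ioo isPreconnected_Ioo ?_ ?_ hmem (hu.summable h0.le h1) hmem
  · refine HasDerivAt.congr_deriv (f := powerSum u) key ?_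
    rw [powerSum, eq_div_iff hξ, ← tsum_mul_right]
    refine tsum_congr fun n => ?_
    rcases n with _ | n
    · simp
    · simp only [Nat.add_sub_cancel]; ring
  · intro n y _
    have := ((hasDerivAt_id (y : ℂ)).pow n).comp_ofReal.const_mul (u n)
    simpa using this
  · intro n y hy
    rcases n with _ | n
    · simp
    · have : ‖((y : ℂ)) ^ n‖ ≤ R ^ n := by
        rw [norm_pow, Complex.norm_real, Real.norm_of_nonneg hy.1.le]
        exact pow_le_pow_left₀ hy.1.le hy.2.le n
      simp only [Nat.add_sub_cancel]
      rw [norm_mul, norm_mul, norm_mul, pow_succ]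
      calc _ ≤ ‖u (n + 1)‖ * (‖((n + 1 : ℕ) : ℂ)‖ * R ^ n) := by gcongr
        _ = _ := by field_simp

/-- Abelian theorem: if `uₙ / sₙ → K`, where `∑ sₙ ξⁿ = (1 - ξ)^(-α)` with `sₙ > 0`, then
`(1 - ξ)^α ∑ uₙ ξⁿ → K` as `ξ → 1⁻`. -/
lemma tendsto_powerSum {s : ℕ → ℝ} (hs : ∀ n, 0 < s n) {α : ℝ} (hα : 0 < α)
    (hsum : ∀ ξ : ℝ, 0 ≤ ξ → ξ < 1 → HasSum (fun n => s n * ξ ^ n) ((1 - ξ) ^ (-α)))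
    {u : ℕ → ℂ} {K : ℂ} (hu : UnitConv u) (hlim : Tendsto (fun n => u n / s n) atTop (𝓝 K)) :
    Tendsto (fun ξ : ℝ => ((1 - ξ) ^ α : ℝ) * powerSum u ξ) (𝓝[<] 1) (𝓝 K) := by
  rw [Metric.tendsto_nhds]
  intro ε hε
  have h2 := Metric.tendsto_atTop.1 hlim (ε / 2) (by positivity)
  obtain ⟨N, hN⟩ := h2
  set A : ℝ := ∑ n ∈ Finset.range N, ‖u n - K * s n‖ with hA
  have hto : Tendsto (fun ξ : ℝ => (1 - ξ) ^ α * A) (𝓝[<] 1) (𝓝 0) := by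
    have : ContinuousAt (fun ξ : ℝ => (1 - ξ) ^ α * A) 1 := by
      refine ContinuousAt.mul (ContinuousAt.rpow_const (by fun_prop) (Or.inr hα.le))
        continuousAt_const
    have h := this.tendsto.mono_left (nhdsWithin_le_nhds (s := Set.Iio 1))
    simpa [Real.zero_rpow hα.ne'] using h
  have hsmall := hto.eventually (gt_mem_nhds (show (0 : ℝ) < ε / 2 by positivity))
  have hpos : ∀ᶠ ξ : ℝ in 𝓝[<] 1, ξ ∈ Set.Ioo (0 : ℝ) 1 := Ioo_mem_nhdsLT (by norm_num)
  filter_upwards [hsmall, hpos] with ξ hξ1 hξ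
  obtain ⟨h0, h1⟩ := hξ
  have h1' : 0 < 1 - ξ := by linarith
  have hS := hsum ξ h0.le h1
  have hSC : HasSum (fun n => (s n : ℂ) * (ξ : ℂ) ^ n) (((1 - ξ) ^ (-α) : ℝ) : ℂ) := by
    exact_mod_cast Complex.hasSum_ofReal.2 hS
  have hw : (((1 - ξ) ^ α : ℝ) : ℂ) * (((1 - ξ) ^ (-α) : ℝ) : ℂ) = 1 := by
    rw [← Complex.ofReal_mul, ← Real.rpow_add h1']; simp
  have hdiff : HasSum (fun n => (u n - K * s n) * (ξ : ℂ) ^ n)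
      (powerSum u ξ - K * (((1 - ξ) ^ (-α) : ℝ) : ℂ)) := by
    have := (hu.summable h0.le h1).hasSum.sub (hSC.mul_left K)
    refine this.congr_fun fun n => ?_
    ring
  have hterm : ∀ n, ‖(u n - K * s n) * (ξ : ℂ) ^ n‖ ≤
      (if n < N then ‖u n - K * s n‖ else 0) + ε / 2 * (s n * ξ ^ n) := by
    intro n
    have hξn : ‖(ξ : ℂ) ^ n‖ = ξ ^ n := by simp [abs_of_pos h0]
    rw [norm_mul, hξn]
    have hsn := hs n
    split_ifs with hn
    · have : ‖u n - K * s n‖ * ξ ^ n ≤ ‖u n - K * s n‖ * 1 := by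
        gcongr; exact pow_le_one₀ h0.le h1.le
      have : 0 ≤ ε / 2 * (s n * ξ ^ n) := by positivity
      linarith
    · have h := hN n (not_lt.1 hn)
      have hsc : (s n : ℂ) ≠ 0 := by exact_mod_cast hsn.ne'
      have h4 : ‖u n - K * s n‖ ≤ ε / 2 * s n := by
        have : u n - K * s n = (u n / s n - K) * s n := by field_simp
        rw [this, norm_mul, Complex.norm_real, Real.norm_of_nonneg hsn.le]
        rw [dist_eq_norm] at h
        gcongr
      calc _ ≤ (ε / 2 * s n) * ξ ^ n := by gcongr
        _ = _ := by ring
  have hfin : HasSum (fun n => if n < N then ‖u n - K * s n‖ else 0) A := by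
    have hA' : A = ∑ n ∈ Finset.range N, if n < N then ‖u n - K * s n‖ else 0 :=
      Finset.sum_congr rfl fun n hn => by simp [Finset.mem_range.1 hn]
    rw [hA']
    exact hasSum_sum_of_ne_finset_zero fun n hn => by simp at hn; simp [hn]
  have hbound : ‖powerSum u ξ - K * (((1 - ξ) ^ (-α) : ℝ) : ℂ)‖ ≤
      A + ε / 2 * (1 - ξ) ^ (-α) := by
    have hs3 := hfin.add (hS.mul_left (ε / 2))
    have := tsum_of_norm_bounded hs3 hterm
    rwa [hdiff.tsum_eq] at this
  have hα1 : 0 < (1 - ξ) ^ α := Real.rpow_pos_of_pos h1' α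
  have e : (((1 - ξ) ^ α : ℝ) : ℂ) * powerSum u ξ - K =
      (((1 - ξ) ^ α : ℝ) : ℂ) * (powerSum u ξ - K * (((1 - ξ) ^ (-α) : ℝ) : ℂ)) := by
    linear_combination K * hw
  have hwr : (1 - ξ) ^ α * (1 - ξ) ^ (-α) = 1 := by exact_mod_cast hw
  rw [dist_eq_norm, e, norm_mul, Complex.norm_real, Real.norm_of_nonneg hα1.le]
  calc _ ≤ (1 - ξ) ^ α * (A + ε / 2 * (1 - ξ) ^ (-α)) := by gcongr
    _ = (1 - ξ) ^ α * A + ε / 2 := by linear_combination ε / 2 * hwr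
    _ < ε := by linarith

/-- The Taylor coefficients `(α)ₙ / n!` of `(1 - ξ)^(-α)`. -/
noncomputable def binomCoeff (α : ℝ) (n : ℕ) : ℝ :=
  (∏ j ∈ Finset.range n, (α + (j : ℝ))) / n.factorial

lemma binomCoeff_pos {α : ℝ} (hα : 0 < α) (n : ℕ) : 0 < binomCoeff α n :=
  div_pos (Finset.prod_pos fun j _ => by positivity) (by positivity)

lemma ascPochhammer_eval_real (α : ℝ) (n : ℕ) :
    (ascPochhammer ℝ n).eval α = ∏ j ∈ Finset.range n, (α + (j : ℝ)) := by
  induction n with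
  | zero => simp
  | succ n ih => rw [ascPochhammer_succ_eval, ih, Finset.prod_range_succ]

lemma hasSum_binomCoeff (α ξ : ℝ) (h0 : 0 ≤ ξ) (h1 : ξ < 1) :
    HasSum (fun n => binomCoeff α n * ξ ^ n) ((1 - ξ) ^ (-α)) := by
  have h := (Real.one_div_one_sub_rpow_hasFPowerSeriesOnBall_zero α).hasSum_sub (y := ξ)
    (by rw [← ENNReal.ofReal_one, Metric.eball_ofReal]; simp [abs_of_nonneg h0, h1])
  rw [one_div, ← Real.rpow_neg (by linarith)] at h
  refine h.congr_fun fun n => ?_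
  have hc : Ring.choose (α + n - 1) n = binomCoeff α n := by
    rw [Ring.choose_eq_smul, Polynomial.descPochhammer_smeval_eq_ascPochhammer,
      Polynomial.ascPochhammer_smeval_eq_eval, ascPochhammer_eval_real, binomCoeff]
    rw [smul_eq_mul, div_eq_inv_mul]
    ring_nf
  simp [hc, mul_comm]

/-! ### The coefficients of the two Frobenius solutions -/

/-- The Taylor coefficients `(a)ₙ (b)ₙ / (n!)²` of `₂F₁(a, b; 1; ·)`. -/
noncomputable def hypCoeff (a b : ℂ) (n : ℕ) : ℂ :=
  cpoch a n * cpoch b n / (n.factorial : ℂ) ^ 2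

/-- The digamma factor `ψ(a+n) + ψ(b+n) - 2ψ(1+n)` of the logarithmic solution. -/
noncomputable def digCoeff (a b : ℂ) (n : ℕ) : ℂ :=
  cdigamma (a + n) + cdigamma (b + n) - 2 * cdigamma (1 + n)

/-- The coefficients of the non-logarithmic part of the second Frobenius solution at `ξ = 0`. -/
noncomputable def logCoeff (a b : ℂ) (n : ℕ) : ℂ := digCoeff a b n * hypCoeff a b n

lemma tendsto_digCoeff (a b : ℂ) : Tendsto (digCoeff a b) atTop (𝓝 0) := by
  have := (tendsto_cdigamma_sub (s := a)).add (tendsto_cdigamma_sub (s := b))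
  rw [add_zero] at this
  exact this.congr fun n => by rw [digCoeff]; ring

lemma one_ne_neg_nat (m : ℕ) : (1 : ℂ) ≠ -m := ne_neg_nat_of_re_pos (by simp) m

lemma hypCoeff_succ (a b : ℂ) (n : ℕ) :
    ((n : ℂ) + 1) ^ 2 * hypCoeff a b (n + 1) = (n + a) * (n + b) * hypCoeff a b n := by
  have h1 : ((n : ℂ) + 1) ≠ 0 := by exact_mod_cast n.succ_ne_zero
  have h2 : (n.factorial : ℂ) ≠ 0 := by exact_mod_cast n.factorial_ne_zero
  simp only [hypCoeff, cpoch, Finset.prod_range_succ, Nat.factorial_succ, Nat.cast_mul,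
    Nat.cast_add, Nat.cast_one]
  field_simp
  ring

lemma digCoeff_succ {a b : ℂ} (ha : ∀ m : ℕ, a ≠ -m) (hb : ∀ m : ℕ, b ≠ -m) (n : ℕ) :
    digCoeff a b (n + 1) = digCoeff a b n + (a + n)⁻¹ + (b + n)⁻¹ - 2 * (1 + (n : ℂ))⁻¹ := by
  have h : ∀ s : ℂ, (∀ m : ℕ, s ≠ -m) →
      cdigamma (s + ((n + 1 : ℕ) : ℂ)) = cdigamma (s + n) + (s + n)⁻¹ := fun s hs => by
    rw [← cdigamma_add_one (ne_neg_nat_add hs n)]; push_cast; ring_nf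
  rw [digCoeff, digCoeff, h a ha, h b hb, h 1 one_ne_neg_nat]
  ring

lemma logCoeff_succ {a b : ℂ} (ha : ∀ m : ℕ, a ≠ -m) (hb : ∀ m : ℕ, b ≠ -m) (n : ℕ) :
    ((n : ℂ) + 1) ^ 2 * logCoeff a b (n + 1) + 2 * (n + 1) * hypCoeff a b (n + 1) =
      (n + a) * (n + b) * logCoeff a b n + (2 * n + a + b) * hypCoeff a b n := by
  have h1 : (1 + (n : ℂ)) ≠ 0 := by rw [add_comm]; exact_mod_cast n.succ_ne_zero
  have h2 : a + n ≠ 0 := by simpa using ne_neg_nat_add ha n 0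
  have h3 : b + n ≠ 0 := by simpa using ne_neg_nat_add hb n 0
  have h := hypCoeff_succ a b n
  have e1 : (a + n) * (a + n)⁻¹ = 1 := mul_inv_cancel₀ h2
  have e2 : (b + n) * (b + n)⁻¹ = 1 := mul_inv_cancel₀ h3
  have e3 : (1 + (n : ℂ)) * (1 + (n : ℂ))⁻¹ = 1 := mul_inv_cancel₀ h1
  rw [logCoeff, logCoeff, digCoeff_succ ha hb]
  linear_combination
    (digCoeff a b n + (a + n)⁻¹ + (b + n)⁻¹) * h
      + hypCoeff a b n * ((n + b) * e1 + (n + a) * e2)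
      - 2 * (n + 1) * hypCoeff a b (n + 1) * e3

/-- `hypCoeff` grows like `K (α)ₙ / n!`, as seen from Euler's limit formula for `Γ`. -/
lemma tendsto_hypCoeff_div {a b : ℂ} {α : ℝ} (hα : 0 < α) (hab : a + b = 1 + α)
    (ha : ∀ m : ℕ, a ≠ -m) (hb : ∀ m : ℕ, b ≠ -m) :
    Tendsto (fun n => hypCoeff a b n / binomCoeff α n) atTop
      (𝓝 (Complex.Gamma 1 * Complex.Gamma α / (Complex.Gamma a * Complex.Gamma b))) := by
  rw [← tendsto_add_atTop_iff_nat 1]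
  have hG := ((Complex.GammaSeq_tendsto_Gamma 1).mul (Complex.GammaSeq_tendsto_Gamma α)).div
    ((Complex.GammaSeq_tendsto_Gamma a).mul (Complex.GammaSeq_tendsto_Gamma b))
    (mul_ne_zero (Complex.Gamma_ne_zero ha) (Complex.Gamma_ne_zero hb))
  refine hG.congr' ?_
  filter_upwards [eventually_ne_atTop 0] with n hn
  have hn0 : (n : ℂ) ≠ 0 := by exact_mod_cast hn
  have hα' : ∀ m : ℕ, (α : ℂ) ≠ -m := ne_neg_nat_of_re_pos (by simpa using hα)
  have hf : (n.factorial : ℂ) ≠ 0 := by exact_mod_cast n.factorial_ne_zero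
  have hf' : ((n + 1).factorial : ℂ) ≠ 0 := by exact_mod_cast (n + 1).factorial_ne_zero
  have hpow : (n : ℂ) ^ a * (n : ℂ) ^ b = (n : ℂ) ^ (1 : ℂ) * (n : ℂ) ^ (α : ℂ) := by
    rw [← Complex.cpow_add _ _ hn0, ← Complex.cpow_add _ _ hn0, hab]
  have h1 : ∏ j ∈ Finset.range (n + 1), ((1 : ℂ) + (j : ℂ)) = ((n + 1).factorial : ℂ) := by
    rw [← Finset.prod_range_add_one_eq_factorial]
    push_cast
    exact Finset.prod_congr rfl fun j _ => add_comm _ _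
  have hpa : (n : ℂ) ^ a ≠ 0 := by simp [hn0]
  have hpb : (n : ℂ) ^ b ≠ 0 := by simp [hn0]
  have ca := cpoch_ne_zero ha (n + 1)
  have cb := cpoch_ne_zero hb (n + 1)
  have cα := cpoch_ne_zero hα' (n + 1)
  have hbin : (binomCoeff α (n + 1) : ℂ) = cpoch α (n + 1) / ((n + 1).factorial : ℂ) := by
    simp [binomCoeff, cpoch]
  rw [hbin, hypCoeff]
  simp only [Pi.div_apply, Complex.GammaSeq, h1]
  change ((n : ℂ) ^ (1 : ℂ) * n.factorial / ((n + 1).factorial : ℂ) *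
      ((n : ℂ) ^ (α : ℂ) * n.factorial / cpoch α (n + 1))) /
    ((n : ℂ) ^ a * n.factorial / cpoch a (n + 1) *
      ((n : ℂ) ^ b * n.factorial / cpoch b (n + 1))) = _
  rw [div_mul_div_comm, div_mul_div_comm, div_div_div_eq, div_div_div_eq]
  rw [div_eq_div_iff (by positivity) (by positivity)]
  linear_combination (-(n.factorial : ℂ) ^ 2 * cpoch a (n + 1) * cpoch b (n + 1) *
    ((n + 1).factorial : ℂ) ^ 2 * cpoch α (n + 1)) * hpow

lemma unitConv_hypCoeff {a b : ℂ} {α : ℝ} (hα : 0 < α) (hab : a + b = 1 + α)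
    (ha : ∀ m : ℕ, a ≠ -m) (hb : ∀ m : ℕ, b ≠ -m) : UnitConv (hypCoeff a b) := by
  obtain ⟨M, hM⟩ := (tendsto_hypCoeff_div hα hab ha hb).norm.bddAbove_range
  have hs : UnitConv fun n => (binomCoeff α n : ℂ) := fun r h0 h1 => by
    refine (hasSum_binomCoeff α r h0 h1).summable.congr fun n => ?_
    rw [Complex.norm_real, Real.norm_of_nonneg (binomCoeff_pos hα n).le]
  have := hs.mul_bounded (v := fun n => hypCoeff a b n / binomCoeff α n) (M := M)
    fun n => hM ⟨n, rfl⟩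
  convert this using 2 with n
  have : (binomCoeff α n : ℂ) ≠ 0 := by exact_mod_cast (binomCoeff_pos hα n).ne'
  field_simp

lemma unitConv_logCoeff {a b : ℂ} {α : ℝ} (hα : 0 < α) (hab : a + b = 1 + α)
    (ha : ∀ m : ℕ, a ≠ -m) (hb : ∀ m : ℕ, b ≠ -m) : UnitConv (logCoeff a b) := by
  obtain ⟨M, hM⟩ := (tendsto_digCoeff a b).norm.bddAbove_range
  exact (unitConv_hypCoeff hα hab ha hb).mul_bounded (M := M) fun n => hM ⟨n, rfl⟩

lemma powerSum_const_nat_quadratic {u : ℕ → ℂ} (hu : UnitConv u) (p q : ℂ) {ξ : ℝ} (h0 : 0 ≤ ξ)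
    (h1 : ξ < 1) :
    UnitConv (fun n => (n + p) * (n + q) * u n) ∧
    powerSum (fun n => (n + p) * (n + q) * u n) ξ =
      powerSum (fun n => (n : ℂ) * (n * u n)) ξ + (p + q) * powerSum (fun n => (n : ℂ) * u n) ξ
        + p * q * powerSum u ξ := by
  have e : (fun n : ℕ => (n + p) * (n + q) * u n) = fun n : ℕ =>
      ((n : ℂ) * (n * u n) + (p + q) * ((n : ℂ) * u n)) + p * q * u n := by
    ext n; ring
  have hA := hu.nat_mul.nat_mul
  have hB := hu.nat_mul.const_mul (p + q)
  have hC := hu.const_mul (p * q)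
  rw [e, powerSum_add (hA.add hB) hC h0 h1, powerSum_add hA hB h0 h1, powerSum_const_mul,
    powerSum_const_mul]
  exact ⟨(hA.add hB).add hC, rfl⟩

/-! ### The differential equations and the recessive solution at `ξ = 1` -/

section Wronskian

variable {a b : ℂ} {α : ℝ}

/-- The hypergeometric equation for `₂F₁(a,b;1;·)` in terms of `θ = ξ d/dξ`:
`θ² P = ξ (θ + a)(θ + b) P`. -/
lemma hyp_ode (hα : 0 < α) (hab : a + b = 1 + α) (ha : ∀ m : ℕ, a ≠ -m) (hb : ∀ m : ℕ, b ≠ -m)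
    {ξ : ℝ} (h0 : 0 ≤ ξ) (h1 : ξ < 1) :
    powerSum (fun n => (n : ℂ) * (n * hypCoeff a b n)) ξ =
      ξ * (powerSum (fun n => (n : ℂ) * (n * hypCoeff a b n)) ξ
        + (a + b) * powerSum (fun n => (n : ℂ) * hypCoeff a b n) ξ
        + a * b * powerSum (hypCoeff a b) ξ) := by
  have ht := unitConv_hypCoeff hα hab ha hb
  rw [← (powerSum_const_nat_quadratic ht a b h0 h1).2]
  conv_lhs => rw [powerSum_shift ht.nat_mul.nat_mul h0 h1]
  simp only [Nat.cast_zero, zero_mul, zero_add]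
  congr 2
  ext n
  rw [← hypCoeff_succ]
  push_cast
  ring

/-- The inhomogeneous equation for the non-logarithmic part `G` of the second Frobenius solution:
`θ² G + 2 θ P = ξ ((θ + a)(θ + b) G + (2 θ + a + b) P)`. -/
lemma log_ode (hα : 0 < α) (hab : a + b = 1 + α) (ha : ∀ m : ℕ, a ≠ -m) (hb : ∀ m : ℕ, b ≠ -m)
    {ξ : ℝ} (h0 : 0 ≤ ξ) (h1 : ξ < 1) :
    powerSum (fun n => (n : ℂ) * (n * logCoeff a b n)) ξ
        + 2 * powerSum (fun n => (n : ℂ) * hypCoeff a b n) ξ =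
      ξ * (powerSum (fun n => (n : ℂ) * (n * logCoeff a b n)) ξ
        + (a + b) * powerSum (fun n => (n : ℂ) * logCoeff a b n) ξ
        + a * b * powerSum (logCoeff a b) ξ
        + (2 * powerSum (fun n => (n : ℂ) * hypCoeff a b n) ξ
          + (a + b) * powerSum (hypCoeff a b) ξ)) := by
  have ht := unitConv_hypCoeff hα hab ha hb
  have hg := unitConv_logCoeff hα hab ha hb
  obtain ⟨hq, hq'⟩ := powerSum_const_nat_quadratic hg a b h0 h1
  rw [← hq', ← powerSum_const_mul, ← powerSum_const_mul,
    ← powerSum_add (ht.nat_mul.const_mul 2) (ht.const_mul (a + b)) h0 h1,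
    ← powerSum_add hq ((ht.nat_mul.const_mul 2).add (ht.const_mul (a + b))) h0 h1,
    ← powerSum_add hg.nat_mul.nat_mul (ht.nat_mul.const_mul 2) h0 h1,
    powerSum_shift (hg.nat_mul.nat_mul.add (ht.nat_mul.const_mul 2)) h0 h1]
  simp only [Nat.cast_zero, zero_mul, mul_zero, zero_add]
  congr 2
  ext n
  have := logCoeff_succ ha hb n
  push_cast
  linear_combination this

/-- Abel's identity: `ξ` times the Wronskian of `P` and `P log ξ + G` is a constant multiple of
`(1 - ξ)^(-(α + 1))`. -/
lemma wronskian_const (hα : 0 < α) (hab : a + b = 1 + α) (ha : ∀ m : ℕ, a ≠ -m)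
    (hb : ∀ m : ℕ, b ≠ -m) :
    ∃ C : ℂ, ∀ ξ ∈ Set.Ioo (0 : ℝ) 1,
      (((1 - ξ) ^ (α + 1) : ℝ) : ℂ) *
        (powerSum (hypCoeff a b) ξ * powerSum (fun n => (n : ℂ) * logCoeff a b n) ξ
          - powerSum (logCoeff a b) ξ * powerSum (fun n => (n : ℂ) * hypCoeff a b n) ξ
          + powerSum (hypCoeff a b) ξ ^ 2) = C := by
  have ht := unitConv_hypCoeff hα hab ha hb
  have hg := unitConv_logCoeff hα hab ha hb
  have key : ∀ ξ ∈ Set.Ioo (0 : ℝ) 1, HasDerivAt (fun ξ : ℝ => (((1 - ξ) ^ (α + 1) : ℝ) : ℂ) *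
        (powerSum (hypCoeff a b) ξ * powerSum (fun n => (n : ℂ) * logCoeff a b n) ξ
          - powerSum (logCoeff a b) ξ * powerSum (fun n => (n : ℂ) * hypCoeff a b n) ξ
          + powerSum (hypCoeff a b) ξ ^ 2)) 0 ξ := by
    rintro ξ ⟨h0, h1⟩
    have h1' : 0 < 1 - ξ := by linarith
    have hP := hasDerivAt_powerSum ht h0 h1
    have hP1 := hasDerivAt_powerSum ht.nat_mul h0 h1
    have hG := hasDerivAt_powerSum hg h0 h1
    have hG1 := hasDerivAt_powerSum hg.nat_mul h0 h1
    have hpow : HasDerivAt (fun ξ : ℝ => (((1 - ξ) ^ (α + 1) : ℝ) : ℂ))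
        ((-(α + 1) * (1 - ξ) ^ α : ℝ) : ℂ) ξ := by
      have h := ((hasDerivAt_id ξ).const_sub 1).rpow_const (p := α + 1) (Or.inl h1'.ne')
      refine h.ofReal_comp.congr_deriv ?_
      rw [add_sub_cancel_right, neg_one_mul]
      rfl
    have hw := hpow.fun_mul (((hP.fun_mul hG1).fun_sub (hG.fun_mul hP1)).fun_add (hP.fun_pow 2))
    refine hw.congr_deriv ?_
    have e1 := hyp_ode hα hab ha hb h0.le h1
    have e2 := log_ode hα hab ha hb h0.le h1
    have hξ : (ξ : ℂ) ≠ 0 := by exact_mod_cast h0.ne'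
    have hpw : (((1 - ξ) ^ (α + 1) : ℝ) : ℂ) = (((1 - ξ) ^ α : ℝ) : ℂ) * (1 - ξ) := by
      rw [Real.rpow_add_one h1'.ne']; push_cast; ring
    rw [hpw]
    push_cast
    generalize ((((1 - ξ) ^ α : ℝ) : ℂ)) = A
    generalize powerSum (hypCoeff a b) ξ = P at *
    generalize powerSum (logCoeff a b) ξ = G at *
    generalize powerSum (fun n => (n : ℂ) * hypCoeff a b n) ξ = P1 at *
    generalize powerSum (fun n => (n : ℂ) * logCoeff a b n) ξ = G1 at *
    generalize powerSum (fun n => (n : ℂ) * (n * hypCoeff a b n)) ξ = P2 at *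
    generalize powerSum (fun n => (n : ℂ) * (n * logCoeff a b n)) ξ = G2 at *
    field_simp
    linear_combination A * P * e2 - A * G * e1 + A * ξ * (P * G1 - G * P1 + P ^ 2) * hab
  obtain ⟨C, hC⟩ := isOpen_Ioo.exists_is_const_of_deriv_eq_zero isPreconnected_Ioo
    (fun ξ hξ => (key ξ hξ).differentiableAt.differentiableWithinAt)
    (fun ξ hξ => (key ξ hξ).deriv)
  exact ⟨C, hC⟩

/-- The solution `P log ξ + G`, singled out by `G / P → 0`, is the recessive one at `ξ = 1`: it
stays bounded there, while `P` grows like `(1 - ξ)^(-α)`. -/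
lemma recessive (hα : 1 ≤ α) (hab : a + b = 1 + α) (ha : ∀ m : ℕ, a ≠ -m) (hb : ∀ m : ℕ, b ≠ -m) :
    ∃ m > 0, ∃ C, ∀ᶠ ξ : ℝ in 𝓝[<] 1, m ≤ (1 - ξ) ^ α * ‖powerSum (hypCoeff a b) ξ‖ ∧
      ‖powerSum (hypCoeff a b) ξ * (Real.log ξ : ℝ) + powerSum (logCoeff a b) ξ‖ ≤ C := by
  have hα0 : 0 < α := by linarith
  have ht := unitConv_hypCoeff hα0 hab ha hb
  have hg := unitConv_logCoeff hα0 hab ha hb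
  set K : ℂ := Complex.Gamma 1 * Complex.Gamma α / (Complex.Gamma a * Complex.Gamma b) with hK
  have hK0 : K ≠ 0 := by
    have : Complex.Gamma α ≠ 0 := Complex.Gamma_ne_zero_of_re_pos (by simpa using hα0)
    simp [hK, this, Complex.Gamma_ne_zero ha, Complex.Gamma_ne_zero hb]
  have hKn : 0 < ‖K‖ := norm_pos_iff.2 hK0
  have hPlim := tendsto_powerSum (binomCoeff_pos hα0) hα0 (hasSum_binomCoeff α) ht
    (tendsto_hypCoeff_div hα0 hab ha hb)
  have hGlim : Tendsto (fun ξ : ℝ => ((1 - ξ) ^ α : ℝ) * powerSum (logCoeff a b) ξ)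
      (𝓝[<] 1) (𝓝 0) := by
    refine tendsto_powerSum (binomCoeff_pos hα0) hα0 (hasSum_binomCoeff α) hg ?_
    have := (tendsto_digCoeff a b).mul (tendsto_hypCoeff_div hα0 hab ha hb)
    rw [zero_mul] at this
    exact this.congr fun n => by rw [logCoeff, mul_div_assoc]
  have hpos : ∀ᶠ ξ : ℝ in 𝓝[<] 1, ξ ∈ Set.Ioo (0 : ℝ) 1 := Ioo_mem_nhdsLT (by norm_num)
  have hnorm := hPlim.norm
  have hlow := hnorm.eventually (lt_mem_nhds (show ‖K‖ / 2 < ‖K‖ by linarith))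
  have hup := hnorm.eventually (gt_mem_nhds (show ‖K‖ < 2 * ‖K‖ by linarith))
  set q : ℝ → ℂ := fun ξ => (Real.log ξ : ℝ) +
    powerSum (logCoeff a b) ξ / powerSum (hypCoeff a b) ξ with hq
  have hqlim : Tendsto q (𝓝[<] 1) (𝓝 0) := by
    have h1 : Tendsto (fun ξ : ℝ => ((Real.log ξ : ℝ) : ℂ)) (𝓝[<] 1) (𝓝 0) := by
      have hc : ContinuousAt (fun ξ : ℝ => ((Real.log ξ : ℝ) : ℂ)) 1 :=
        Complex.continuous_ofReal.continuousAt.comp (Real.continuousAt_log one_ne_zero)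
      simpa using hc.tendsto.mono_left (nhdsWithin_le_nhds (s := Set.Iio 1))
    have h2 := hGlim.div hPlim hK0
    rw [zero_div] at h2
    have h3 := h1.add h2
    rw [add_zero] at h3
    refine h3.congr' ?_
    filter_upwards [hpos] with ξ hξ
    have : (((1 - ξ) ^ α : ℝ) : ℂ) ≠ 0 := by
      exact_mod_cast (Real.rpow_pos_of_pos (by linarith [hξ.2]) α).ne'
    simp only [hq, Pi.div_apply]
    rw [mul_div_mul_left _ _ this]
  obtain ⟨W, hW⟩ := wronskian_const hα0 hab ha hb
  -- Work on a left neighbourhood `(ξ₀, 1)` on which the size of `P` is controlled.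
  obtain ⟨ξ₀, hξ₀, hI⟩ := (mem_nhdsLT_iff_exists_Ioo_subset' (show (0 : ℝ) < 1 by norm_num)).1
    ((hpos.and (hlow.and hup)).and (Ioo_mem_nhdsLT (show (1 / 2 : ℝ) < 1 by norm_num)))
  set D : ℝ := 2 * ‖W‖ / (‖K‖ / 2) ^ 2 with hD
  have hfacts : ∀ ξ ∈ Set.Ioo ξ₀ 1, 0 < 1 - ξ ∧ 1 / 2 < ξ ∧
      ‖K‖ / 2 < (1 - ξ) ^ α * ‖powerSum (hypCoeff a b) ξ‖ ∧
      (1 - ξ) ^ α * ‖powerSum (hypCoeff a b) ξ‖ < 2 * ‖K‖ := by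
    intro ξ hξ
    obtain ⟨⟨hp, hl, hu⟩, h12⟩ := hI hξ
    have hp1 : 0 < 1 - ξ := by linarith [hp.2]
    rw [norm_mul, Complex.norm_real, Real.norm_of_nonneg (Real.rpow_nonneg hp1.le α)] at hl hu
    exact ⟨hp1, h12.1, hl, hu⟩
  have hPne : ∀ ξ ∈ Set.Ioo ξ₀ 1, powerSum (hypCoeff a b) ξ ≠ 0 := by
    intro ξ hξ h
    have := (hfacts ξ hξ).2.2.1
    rw [h, norm_zero, mul_zero] at this
    linarith
  have hderiv : ∀ ξ ∈ Set.Ioo ξ₀ 1, ∃ q', HasDerivAt q q' ξ ∧ ‖q'‖ ≤ D * (1 - ξ) ^ (α - 1) := by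
    intro ξ hξ
    obtain ⟨hp1, h12, hl, hu⟩ := hfacts ξ hξ
    have h0 : 0 < ξ := by linarith
    have h1 : ξ < 1 := hξ.2
    have hP := hasDerivAt_powerSum ht h0 h1
    have hG := hasDerivAt_powerSum hg h0 h1
    have hPn := hPne ξ hξ
    have hξc : (ξ : ℂ) ≠ 0 := by exact_mod_cast h0.ne'
    have hlog := (Real.hasDerivAt_log h0.ne').ofReal_comp
    refine ⟨_, hlog.fun_add (hG.fun_div hP hPn), ?_⟩
    have hw := hW ξ ⟨h0, h1⟩
    have hA : 0 < (1 - ξ) ^ α := Real.rpow_pos_of_pos hp1 α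
    have hA1 : 0 < (1 - ξ) ^ (α + 1) := Real.rpow_pos_of_pos hp1 _
    have hA1c : (((1 - ξ) ^ (α + 1) : ℝ) : ℂ) ≠ 0 := by exact_mod_cast hA1.ne'
    have e : ((ξ⁻¹ : ℝ) : ℂ) + (powerSum (fun n => (n : ℂ) * logCoeff a b n) ξ / ξ *
        powerSum (hypCoeff a b) ξ - powerSum (logCoeff a b) ξ *
        (powerSum (fun n => (n : ℂ) * hypCoeff a b n) ξ / ξ)) / powerSum (hypCoeff a b) ξ ^ 2
        = W / ((((1 - ξ) ^ (α + 1) : ℝ) : ℂ) * ξ * powerSum (hypCoeff a b) ξ ^ 2) := by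
      rw [← hw]
      push_cast
      field_simp
      ring
    rw [e, norm_div, norm_mul, norm_mul, norm_pow, Complex.norm_real, Complex.norm_real,
      Real.norm_of_nonneg hA1.le, Real.norm_of_nonneg h0.le]
    set p := ‖powerSum (hypCoeff a b) ξ‖ with hp
    have hsplit : (1 - ξ) ^ (α - 1) * (1 - ξ) ^ (α + 1) = ((1 - ξ) ^ α) ^ 2 := by
      rw [← Real.rpow_add hp1, ← Real.rpow_natCast, ← Real.rpow_mul hp1.le]
      congr 1; push_cast; ring
    have hp0 : 0 < p := norm_pos_iff.2 hPn
    rw [div_le_iff₀ (by positivity)]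
    have h4 : (‖K‖ / 2) ^ 2 ≤ ((1 - ξ) ^ α * p) ^ 2 := by gcongr
    calc ‖W‖ = D * (‖K‖ / 2) ^ 2 * (1 / 2) := by rw [hD]; field_simp
      _ ≤ D * ((1 - ξ) ^ α * p) ^ 2 * ξ := by gcongr
      _ = D * (1 - ξ) ^ (α - 1) * ((1 - ξ) ^ (α + 1) * ξ * p ^ 2) := by
        rw [mul_pow, ← hsplit]; ring
  have hD0 : 0 ≤ D := by positivity
  -- Since `α ≥ 1` the bound on `q'` is decreasing, so the mean value inequality on `[ξ, t]`
  -- with `t → 1` bounds `q` itself.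
  have hqbound : ∀ ξ ∈ Set.Ioo ξ₀ 1, ‖q ξ‖ ≤ D * (1 - ξ) ^ α := by
    intro ξ hξ
    have hp1 := (hfacts ξ hξ).1
    have hlim : Tendsto (fun t => ‖q t - q ξ‖) (𝓝[<] 1) (𝓝 ‖0 - q ξ‖) :=
      (hqlim.sub_const _).norm
    have hle : ‖0 - q ξ‖ ≤ D * (1 - ξ) ^ α := by
      refine le_of_tendsto hlim ?_
      filter_upwards [Ioo_mem_nhdsLT hξ.2] with t htt
      choose! q' hq' hq'b using hderiv
      have hsub : Set.Icc ξ t ⊆ Set.Ioo ξ₀ 1 := fun y hy =>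
        ⟨hξ.1.trans_le hy.1, hy.2.trans_lt htt.2⟩
      have := Convex.norm_image_sub_le_of_norm_hasDerivWithin_le (f := q) (f' := q')
        (s := Set.Icc ξ t) (x := ξ) (y := t) (C := D * (1 - ξ) ^ (α - 1))
        (fun y hy => (hq' y (hsub hy)).hasDerivWithinAt)
        (fun y hy => (hq'b y (hsub hy)).trans (by
          have : 0 ≤ 1 - y := by linarith [(hsub hy).2]
          have : 1 - y ≤ 1 - ξ := by linarith [hy.1]
          gcongr))
        (convex_Icc _ _) ⟨le_rfl, htt.1.le⟩ ⟨htt.1.le, le_rfl⟩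
      refine this.trans ?_
      rw [Real.norm_of_nonneg (by linarith [htt.1])]
      calc D * (1 - ξ) ^ (α - 1) * (t - ξ) ≤ D * (1 - ξ) ^ (α - 1) * (1 - ξ) := by
            have := htt.2
            gcongr
        _ = D * (1 - ξ) ^ α := by
            rw [Real.rpow_sub_one hp1.ne']; field_simp
    simpa using hle
  refine ⟨‖K‖ / 2, by positivity, D * (2 * ‖K‖), ?_⟩
  filter_upwards [Ioo_mem_nhdsLT hξ₀] with ξ hξ
  obtain ⟨hp1, h12, hl, hu⟩ := hfacts ξ hξ
  refine ⟨hl.le, ?_⟩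
  have hPn := hPne ξ hξ
  have e : powerSum (hypCoeff a b) ξ * (Real.log ξ : ℝ) + powerSum (logCoeff a b) ξ =
      q ξ * powerSum (hypCoeff a b) ξ := by
    simp only [hq]; field_simp
  rw [e, norm_mul]
  calc _ ≤ (D * (1 - ξ) ^ α) * ‖powerSum (hypCoeff a b) ξ‖ := by
        gcongr; exact hqbound ξ hξ
    _ = D * ((1 - ξ) ^ α * ‖powerSum (hypCoeff a b) ξ‖) := by ring
    _ ≤ D * (2 * ‖K‖) := by gcongr

end Wronskian

/-! ### Square integrability at `x = 1` -/

lemma integrableOn_of_continuousOn_of_bounded {h : ℝ → ℝ} (hc : ContinuousOn h (Set.Ico 0 1))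
    {C : ℝ} (hb : ∀ᶠ x in 𝓝[<] (1 : ℝ), ‖h x‖ ≤ C) : IntegrableOn h (Set.Ioo 0 1) := by
  obtain ⟨x₁, hx₁, hbx⟩ := (mem_nhdsLT_iff_exists_Ioo_subset (a := (1 : ℝ))).1 hb
  rw [Set.mem_Iio] at hx₁
  set x₀ := max x₁ 0
  have hx₀ : x₀ < 1 := max_lt hx₁ one_pos
  have h0 : IntegrableOn h (Set.Icc 0 x₀) :=
    (hc.mono fun x hx => ⟨hx.1, hx.2.trans_lt hx₀⟩).integrableOn_Icc
  have h1 : IntegrableOn h (Set.Ioo x₀ 1) := by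
    refine (integrableOn_const (C := C) (by simp)).mono' ?_ ?_
    · exact (hc.mono fun x hx => ⟨(le_max_right _ _).trans hx.1.le, hx.2⟩).aestronglyMeasurable
        measurableSet_Ioo
    · refine (ae_restrict_iff' measurableSet_Ioo).2 (Eventually.of_forall fun x hx => ?_)
      exact hbx ⟨(le_max_left _ _).trans_lt hx.1, hx.2⟩
  refine (h0.union h1).mono_set fun x hx => ?_
  rcases le_or_gt x x₀ with h | h
  · exact Or.inl ⟨hx.1.le, h⟩
  · exact Or.inr ⟨h, hx.2⟩

lemma not_integrableOn_of_inv_le {h : ℝ → ℝ} {e : ℝ} (he : 0 < e)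
    (hb : ∀ᶠ x in 𝓝[<] (1 : ℝ), e * (1 - x)⁻¹ ≤ h x) : ¬ IntegrableOn h (Set.Ioo 0 1) := by
  intro hint
  obtain ⟨x₁, hx₁, hbx⟩ := (mem_nhdsLT_iff_exists_Ioo_subset (a := (1 : ℝ))).1 hb
  rw [Set.mem_Iio] at hx₁
  set x₀ := max x₁ 0
  have hx₀ : x₀ < 1 := max_lt hx₁ one_pos
  have h1 : IntegrableOn h (Set.Ioo x₀ 1) :=
    hint.mono_set (Set.Ioo_subset_Ioo_left (le_max_right _ _))
  have h2 : IntegrableOn (fun x : ℝ => (x - 1)⁻¹) (Set.Ioo x₀ 1) := by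
    refine (h1.const_mul e⁻¹).mono' (by fun_prop) ?_
    refine (ae_restrict_iff' measurableSet_Ioo).2 (Eventually.of_forall fun x hx => ?_)
    have : e * (1 - x)⁻¹ ≤ h x := hbx ⟨(le_max_left _ _).trans_lt hx.1, hx.2⟩
    have hx1 : 0 < 1 - x := by linarith [hx.2]
    rw [norm_inv, Real.norm_eq_abs, abs_sub_comm, abs_of_pos hx1]
    rw [inv_mul_eq_div, le_div_iff₀ he]
    linarith
  have h3 := (intervalIntegrable_iff_integrableOn_Ioo_of_le hx₀.le).2 h2
  rw [intervalIntegrable_sub_inv_iff] at h3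
  rcases h3 with h3 | h3
  · exact hx₀.ne h3
  · exact h3 Set.right_mem_uIcc

lemma sigmaAB_sq (α : ℝ) (z : ℂ) : sigmaAB α 0 z ^ 2 = (1 + α) ^ 2 + 4 * z := by
  rw [sigmaAB, ← Complex.cpow_nat_mul]
  norm_num

/-- Two numbers with real sum and non-real product are not real; in particular neither is a
pole of the Gamma function. -/
lemma ne_neg_nat_of_mul_im {a b : ℂ} {s : ℝ} (hs : a + b = s) (hm : (a * b).im ≠ 0) (m : ℕ) :
    a ≠ -m := by
  rintro rfl
  have : b = ((s + m : ℝ) : ℂ) := by push_cast; linear_combination hs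
  apply hm
  rw [this]
  simp

lemma y1Leg_eq (α : ℝ) (z : ℂ) (x : ℝ) :
    y1Leg α z x = powerSum (hypCoeff ((1 + (α : ℂ) + sigmaAB α 0 z) / 2)
      ((1 + (α : ℂ) - sigmaAB α 0 z) / 2)) ((1 + x) / 2) := by
  rw [y1Leg, hyp2F1, powerSum]
  refine tsum_congr fun n => ?_
  have : cpoch 1 n = n.factorial := by
    induction n with
    | zero => simp [cpoch]
    | succ n ih =>
      rw [cpoch, Finset.prod_range_succ, ← cpoch, ih, Nat.factorial_succ]
      push_cast; ring
  rw [hypCoeff, this, sq]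

/-- Modulo a multiple of `y₁`, the logarithmic solution is `P log ξ + G`, the combination that
stays bounded at `ξ = 1`. -/
lemma logSol_eq {α : ℝ} {z a b : ℂ} (hα : 0 < α) (hA : a = (1 + (α : ℂ) + sigmaAB α 0 z) / 2)
    (hB : b = (1 + (α : ℂ) - sigmaAB α 0 z) / 2) (ha : ∀ m : ℕ, a ≠ -m) (hb : ∀ m : ℕ, b ≠ -m)
    {x : ℝ} (h0 : -1 < x) (h1 : x < 1) :
    logSol α z x = powerSum (hypCoeff a b) ((1 + x) / 2) * (Real.log ((1 + x) / 2) : ℝ)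
      + powerSum (logCoeff a b) ((1 + x) / 2)
      - (2 * eulerGammaC + cdigamma a + cdigamma b) * powerSum (hypCoeff a b) ((1 + x) / 2) := by
  have hab : a + b = 1 + α := by rw [hA, hB]; ring
  rw [logSol, y1Leg_eq, ← hA, ← hB]
  have ht := unitConv_hypCoeff hα hab ha hb
  have hg := unitConv_logCoeff hα hab ha hb
  set κ := 2 * eulerGammaC + cdigamma a + cdigamma b with hκ
  have hξ0 : 0 ≤ (1 + x) / 2 := by linarith
  have hξ1 : (1 + x) / 2 < 1 := by linarith
  have hu := hg.add (ht.const_mul (-κ))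
  have e1 := powerSum_add hg (ht.const_mul (-κ)) hξ0 hξ1
  rw [powerSum_const_mul, powerSum, (hu.summable hξ0 hξ1).tsum_eq_zero_add] at e1
  have z0 : (logCoeff a b 0 + -κ * hypCoeff a b 0) = 0 := by
    simp only [logCoeff, digCoeff, hκ, eulerGammaC, Nat.cast_zero, add_zero]
    ring
  rw [z0, zero_mul, zero_add] at e1
  have e2 : ∀ P L G : ℂ, P * L + G - κ * P = P * L + (G + -κ * P) := fun _ _ _ => by ring
  rw [e2, ← e1]
  congr 1
  refine tsum_congr fun n => ?_
  have e3 : (1 : ℂ) + ((n + 1 : ℕ) : ℂ) = n + 2 := by push_cast; ring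
  simp only [logCoeff, digCoeff, hypCoeff, hκ, e3]
  push_cast
  rw [div_pow]
  field_simp
  ring

lemma continuousOn_powerSum {u : ℕ → ℂ} (hu : UnitConv u) :
    ContinuousOn (powerSum u) (Set.Ioo 0 1) := fun _ hξ =>
  (hasDerivAt_powerSum hu hξ.1 hξ.2).continuousAt.continuousWithinAt

lemma tendsto_half_add : Tendsto (fun x : ℝ => (1 + x) / 2) (𝓝[<] 1) (𝓝[<] 1) := by
  refine tendsto_nhdsWithin_iff.2 ⟨?_, ?_⟩
  · have : ContinuousAt (fun x : ℝ => (1 + x) / 2) 1 := by fun_prop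
    have h := this.tendsto
    norm_num at h
    exact h.mono_left nhdsWithin_le_nhds
  · filter_upwards [self_mem_nhdsWithin] with x hx
    simp only [Set.mem_Iio] at *
    linarith

/-- For `α ≥ 1` and `z ∉ ℝ`, the combination `-2^{-α-1} y₂ + c y₁` is square integrable
near `1` w.r.t. the weight `(1-x)^α` iff `c = -2^{-α-1}[2γ_E + ψ(a₊) + ψ(a₋)]`. -/
theorem jacobi_m_function_beta_zero (α : ℝ) (hα : 1 ≤ α) (z : ℂ) (hz : z.im ≠ 0)
    (c : ℂ) :
    IntegrableOn
      (fun x : ℝ =>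
        ‖-(((2 : ℝ) ^ (-α - 1) : ℝ) : ℂ) * logSol α z x + c * y1Leg α z x‖ ^ 2 *
          (1 - x) ^ α)
      (Set.Ioo (0 : ℝ) 1) ↔
    c = -(((2 : ℝ) ^ (-α - 1) : ℝ) : ℂ) *
        (2 * eulerGammaC + cdigamma ((1 + (α : ℂ) + sigmaAB α 0 z) / 2) +
          cdigamma ((1 + (α : ℂ) - sigmaAB α 0 z) / 2)) := by
  have hα0 : 0 < α := by linarith
  set a := (1 + (α : ℂ) + sigmaAB α 0 z) / 2 with hA
  set b := (1 + (α : ℂ) - sigmaAB α 0 z) / 2 with hB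
  have hab : a + b = 1 + α := by rw [hA, hB]; ring
  have hmul : a * b = -z := by
    rw [hA, hB]; linear_combination (-1 / 4) * sigmaAB_sq α z
  have ha : ∀ m : ℕ, a ≠ -m := ne_neg_nat_of_mul_im (b := b) (s := 1 + α)
    (by rw [hab]; push_cast; rfl) (by simpa [hmul] using hz)
  have hb : ∀ m : ℕ, b ≠ -m := ne_neg_nat_of_mul_im (b := a) (s := 1 + α)
    (by rw [add_comm, hab]; push_cast; rfl) (by simpa [mul_comm b, hmul] using hz)
  have ht := unitConv_hypCoeff hα0 hab ha hb
  have hg := unitConv_logCoeff hα0 hab ha hb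
  set k : ℂ := (((2 : ℝ) ^ (-α - 1) : ℝ) : ℂ)
  set κ := 2 * eulerGammaC + cdigamma a + cdigamma b with hκ
  set P : ℝ → ℂ := fun x => powerSum (hypCoeff a b) ((1 + x) / 2) with hP
  set R : ℝ → ℂ := fun x => powerSum (hypCoeff a b) ((1 + x) / 2) *
    (Real.log ((1 + x) / 2) : ℝ) + powerSum (logCoeff a b) ((1 + x) / 2) with hR
  have hfun : ∀ x ∈ Set.Ioo (0 : ℝ) 1,
      ‖-k * logSol α z x + c * y1Leg α z x‖ ^ 2 * (1 - x) ^ α =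
      ‖-k * R x + (c + k * κ) * P x‖ ^ 2 * (1 - x) ^ α := fun x hx => by
    rw [logSol_eq hα0 hA hB ha hb (by linarith [hx.1]) hx.2, y1Leg_eq, ← hA, ← hB]
    congr 3
    simp only [hR, hP]
    ring
  rw [integrableOn_congr_fun hfun measurableSet_Ioo]
  obtain ⟨m, hm, C, hev⟩ := recessive hα hab ha hb
  have hev' := tendsto_half_add.eventually hev
  constructor
  · intro hint
    by_contra hne
    have hδ : 0 < ‖c + k * κ‖ := norm_pos_iff.2 fun h => hne (by linear_combination h)
    set δ := c + k * κ
    have hmδ : 0 < ‖δ‖ * m := mul_pos hδ hm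
    -- the dominant part `δ P` beats the bounded part `k R` near the endpoint
    have hsmall : ∀ᶠ x : ℝ in 𝓝[<] 1,
        ‖k‖ * C * (1 - (1 + x) / 2) ^ α < ‖δ‖ * m / 2 := by
      have hc : ContinuousAt (fun x : ℝ => ‖k‖ * C * (1 - (1 + x) / 2) ^ α) 1 :=
        continuousAt_const.mul (ContinuousAt.rpow_const (by fun_prop) (Or.inr hα0.le))
      have hl := hc.tendsto
      norm_num [Real.zero_rpow hα0.ne'] at hl
      exact (hl.mono_left nhdsWithin_le_nhds).eventually_lt_const (by positivity)
    refine not_integrableOn_of_inv_le (e := 2 * (‖δ‖ * m / 2) ^ 2) (by positivity) ?_ hint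
    filter_upwards [hev', hsmall, Ioo_mem_nhdsLT (zero_lt_one (α := ℝ))] with x hx hs hx01
    obtain ⟨hl, hu⟩ := hx
    have hpos : 0 < 1 - (1 + x) / 2 := by linarith [hx01.2]
    have hle : (1 - (1 + x) / 2) ^ α ≤ 1 - (1 + x) / 2 := by
      simpa using Real.rpow_le_rpow_of_exponent_ge hpos (by linarith [hx01.1]) hα
    have hle2 : (1 - (1 + x) / 2) ^ α ≤ (1 - x) ^ α :=
      Real.rpow_le_rpow hpos.le (by linarith [hx01.2]) hα0.le
    have hinv : (1 - x)⁻¹ = (1 - (1 + x) / 2)⁻¹ / 2 := by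
      rw [show 1 - x = 2 * (1 - (1 + x) / 2) by ring, mul_inv]; ring
    rw [hinv]
    have hw : 0 < (1 - (1 + x) / 2) ^ α := Real.rpow_pos_of_pos hpos _
    generalize 1 - (1 + x) / 2 = t at *
    generalize t ^ α = w at *
    have hN : ‖δ‖ * m / 2 ≤ w * ‖-k * R x + δ * P x‖ := by
      have h1 : ‖δ * P x‖ ≤ ‖-k * R x + δ * P x‖ + ‖k * R x‖ := by
        have := norm_add_le (-k * R x + δ * P x) (k * R x)
        rwa [show -k * R x + δ * P x + k * R x = δ * P x by ring] at this
      rw [norm_mul, norm_mul k] at h1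
      have h2 : ‖k‖ * ‖R x‖ ≤ ‖k‖ * C := by gcongr
      have h3 : ‖δ‖ * m ≤ ‖δ‖ * (w * ‖P x‖) := by gcongr
      nlinarith
    set N := ‖-k * R x + δ * P x‖
    have hN2 : (‖δ‖ * m / 2) ^ 2 ≤ (w * N) ^ 2 := by gcongr
    calc 2 * (‖δ‖ * m / 2) ^ 2 * (t⁻¹ / 2) = (‖δ‖ * m / 2) ^ 2 * t⁻¹ := by ring
      _ ≤ (w * N) ^ 2 * w⁻¹ := by gcongr
      _ = N ^ 2 * w := by field_simp
      _ ≤ N ^ 2 * (1 - x) ^ α := by gcongr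
  · intro hc
    have hδ : c + k * κ = 0 := by rw [hc]; ring
    simp only [hδ, zero_mul, add_zero]
    have hmaps : Set.MapsTo (fun x : ℝ => (1 + x) / 2) (Set.Ico 0 1) (Set.Ioo 0 1) :=
      fun x hx => ⟨by linarith [hx.1], by linarith [hx.2]⟩
    have hhalf : ContinuousOn (fun x : ℝ => (1 + x) / 2) (Set.Ico 0 1) := by fun_prop
    have hRc : ContinuousOn R (Set.Ico 0 1) := by
      refine (((continuousOn_powerSum ht).comp hhalf hmaps).mul ?_).add
        ((continuousOn_powerSum hg).comp hhalf hmaps)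
      exact Complex.continuous_ofReal.comp_continuousOn
        (hhalf.log fun x hx => (hmaps hx).1.ne')
    refine integrableOn_of_continuousOn_of_bounded (C := (‖k‖ * C) ^ 2) ?_ ?_
    · refine ((continuousOn_const.mul hRc).norm.pow 2).mul
        (ContinuousOn.rpow_const (by fun_prop) fun x _ => Or.inr hα0.le)
    · filter_upwards [hev', Ioo_mem_nhdsLT (zero_lt_one (α := ℝ))] with x hx hx01
      have h1 : 0 ≤ 1 - x := by linarith [hx01.2]
      have hw : (1 - x) ^ α ≤ 1 := Real.rpow_le_one h1 (by linarith [hx01.1]) hα0.le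
      have hw0 : 0 ≤ (1 - x) ^ α := Real.rpow_nonneg h1 _
      rw [Real.norm_of_nonneg (by positivity), norm_mul, norm_neg]
      have hu : ‖R x‖ ≤ C := hx.2
      calc (‖k‖ * ‖R x‖) ^ 2 * (1 - x) ^ α ≤ (‖k‖ * C) ^ 2 * 1 := by gcongr
        _ = _ := mul_one _
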